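/- arXiv:math/0012191 — 2 statements merged into one kernel-verified Lean document; each statement's English description precedes it below -/
import Mathlib

section
/- Let k, l ≥ 1 be integers with k ≤ |α| if α ∈ ℤ and l ≤ |β| if β ∈ ℤ. Then Ker (L_{α,β;ε} − Id)^k ∩ Ker (L_{α,β;ε} + Id)^l = {0}, and the kernel of the composite operator (L_{α,β;ε} − Id)^k ∘ (L_{α,β;ε} + Id)^l on functions ℤ → ℂ equals the direct sum Ker (L_{α,β;ε} − Id)^k ⊕ Ker (L_{α,β;ε} + Id)^l, i.e. the 2(k+l)-dimensional span of the functions φ₊^{(0)},…,φ₊^{(k−1)}, ψ₊^{(0)},…,ψ₊^{(k−1)}, φ₋^{(0)},…,φ₋^{(l−1)}, ψ₋^{(0)},…,ψ₋^{(l−1)}. -/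
/-- Pochhammer symbol `(a)_n` for complex `a` and integer `n`. -/
noncomputable def poch (a : ℂ) (n : ℤ) : ℂ :=
  if 0 ≤ n then ∏ j ∈ Finset.range n.toNat, (a + (j : ℂ))
  else (∏ j ∈ Finset.range (-n).toNat, (a + (n : ℂ) + (j : ℂ)))⁻¹

/-- Gauss hypergeometric series `F(a,b;c;x)`. -/
noncomputable def hypF (a b c x : ℂ) : ℂ :=
  ∑' j : ℕ, (poch a (j : ℤ) * poch b (j : ℤ)) / ((j.factorial : ℂ) * poch c (j : ℤ)) * x ^ j

/-- The Jacobi difference operator `L_{α,β;ε}`. -/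
noncomputable def jacobiL (α β ε : ℂ) (f : ℤ → ℂ) (n : ℤ) : ℂ :=
  (2 * ((n : ℂ) + ε + 1) * ((n : ℂ) + ε + α + β + 1) /
      ((2 * (n : ℂ) + 2 * ε + α + β + 1) * (2 * (n : ℂ) + 2 * ε + α + β + 2))) * f (n + 1)
  + ((β ^ 2 - α ^ 2) /
      ((2 * (n : ℂ) + 2 * ε + α + β) * (2 * (n : ℂ) + 2 * ε + α + β + 2))) * f n
  + (2 * ((n : ℂ) + ε + α) * ((n : ℂ) + ε + β) /
      ((2 * (n : ℂ) + 2 * ε + α + β) * (2 * (n : ℂ) + 2 * ε + α + β + 1))) * f (n - 1)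

/-- The eigenvalue `λ_ε(n) = (n+ε)(n+ε+α+β+1)`. -/
noncomputable def lamE (α β ε : ℂ) (n : ℤ) : ℂ := ((n : ℂ) + ε) * ((n : ℂ) + ε + α + β + 1)

/-- The function `p^{α,β}_ε(n,z)` (case `α ∉ ℤ_{<0}`). -/
noncomputable def pStd (α β ε : ℂ) (n : ℤ) (z : ℂ) : ℂ :=
  (poch (ε + α + 1) n / poch (ε + 1) n) *
    hypF (-((n : ℂ) + ε)) ((n : ℂ) + ε + α + β + 1) (α + 1) ((1 - z) / 2)

/-- None of `ε, ε+α, ε+β, ε+α+β, 2ε+α+β` is an integer. -/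
def GoodParams (α β ε : ℂ) : Prop :=
  ∀ m : ℤ, ε ≠ (m : ℂ) ∧ ε + α ≠ (m : ℂ) ∧ ε + β ≠ (m : ℂ) ∧
    ε + α + β ≠ (m : ℂ) ∧ 2 * ε + α + β ≠ (m : ℂ)

/-- `φ₊^{(i)}(n)`. -/
noncomputable def phiPd (α β ε : ℂ) (i : ℕ) (n : ℤ) : ℂ :=
  (poch (ε + α + 1) n / poch (ε + 1) n) *
    (poch (-((n : ℂ) + ε)) (i : ℤ) * poch ((n : ℂ) + ε + α + β + 1) (i : ℤ)) /
      ((-2 : ℂ) ^ i * (i.factorial : ℂ) * poch (α + 1) (i : ℤ))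

/-- `ψ₊^{(i)}(n)`. -/
noncomputable def psiPd (α β ε : ℂ) (i : ℕ) (n : ℤ) : ℂ :=
  (poch (ε + β + 1) n / poch (ε + α + β + 1) n) *
    (poch (-((n : ℂ) + ε + α + β)) (i : ℤ) * poch ((n : ℂ) + ε + 1) (i : ℤ)) /
      ((-2 : ℂ) ^ i * (i.factorial : ℂ) * poch (-α + 1) (i : ℤ))

/-- `φ₋^{(i)}(n)`. -/
noncomputable def phiMd (α β ε : ℂ) (i : ℕ) (n : ℤ) : ℂ :=
  (-1 : ℂ) ^ n * (poch (ε + β + 1) n / poch (ε + 1) n) *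
    (poch (-((n : ℂ) + ε)) (i : ℤ) * poch ((n : ℂ) + ε + α + β + 1) (i : ℤ)) /
      ((2 : ℂ) ^ i * (i.factorial : ℂ) * poch (β + 1) (i : ℤ))

/-- `ψ₋^{(i)}(n)`. -/
noncomputable def psiMd (α β ε : ℂ) (i : ℕ) (n : ℤ) : ℂ :=
  (-1 : ℂ) ^ n * (poch (ε + α + 1) n / poch (ε + α + β + 1) n) *
    (poch (-((n : ℂ) + ε + α + β)) (i : ℤ) * poch ((n : ℂ) + ε + 1) (i : ℤ)) /
      ((2 : ℂ) ^ i * (i.factorial : ℂ) * poch (-β + 1) (i : ℤ))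

/-- The Jacobi difference operator as a linear endomorphism of `ℤ → ℂ`. -/
noncomputable def jacobiLin (α β ε : ℂ) : Module.End ℂ (ℤ → ℂ) where
  toFun f := jacobiL α β ε f
  map_add' f g := by
    funext n
    simp only [jacobiL, Pi.add_apply]
    ring
  map_smul' c f := by
    funext n
    simp only [jacobiL, Pi.smul_apply, smul_eq_mul, RingHom.id_apply]
    ring


theorem aux_poch_nat (a : ℂ) (i : ℕ) : poch a (i : ℤ) = ∏ j ∈ Finset.range i, (a + (j : ℂ)) := by
  simp [poch]

theorem aux_poch_nat_succ (a : ℂ) (i : ℕ) :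
    poch a ((i + 1 : ℕ) : ℤ) = poch a (i : ℤ) * (a + i) := by
  rw [aux_poch_nat, aux_poch_nat, Finset.prod_range_succ]

theorem aux_poch_nat_shift (a : ℂ) (i : ℕ) :
    poch a (i : ℤ) * (a + i) = a * poch (a + 1) (i : ℤ) := by
  rw [← aux_poch_nat_succ, aux_poch_nat, aux_poch_nat, Finset.prod_range_succ', mul_comm]
  congr 1
  · simp
  · refine Finset.prod_congr rfl fun j _ => ?_
    push_cast; ring

theorem aux_poch_succ (a : ℂ) (ha : ∀ m : ℤ, a ≠ m) (n : ℤ) :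
    poch a (n + 1) = poch a n * (a + n) := by
  rcases le_or_gt 0 n with h | h
  · lift n to ℕ using h
    exact_mod_cast aux_poch_nat_succ a n
  · obtain ⟨m, rfl⟩ : ∃ m : ℕ, n = -((m : ℤ) + 1) := ⟨(-n - 1).toNat, by omega⟩
    have h0 : a + ((-((m : ℤ) + 1) : ℤ) : ℂ) ≠ 0 := by
      intro h
      apply ha (m + 1)
      push_cast at h ⊢
      linear_combination h
    have e1 : poch a (-((m : ℤ) + 1)) =
        ((∏ j ∈ Finset.range m, (a - m + (j : ℂ))) * (a + ((-((m : ℤ) + 1) : ℤ) : ℂ)))⁻¹ := by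
      unfold poch
      rw [if_neg (by omega)]
      have : (- -((m : ℤ) + 1)).toNat = m + 1 := by omega
      rw [this, Finset.prod_range_succ']
      congr 2
      · refine Finset.prod_congr rfl fun j _ => ?_
        push_cast; ring
      · simp
    have e2 : poch a (-((m : ℤ) + 1) + 1) = (∏ j ∈ Finset.range m, (a - m + (j : ℂ)))⁻¹ := by
      rcases Nat.eq_zero_or_pos m with rfl | hm
      · simp [poch]
      · unfold poch
        rw [if_neg (by omega)]
        have : (-(-((m : ℤ) + 1) + 1)).toNat = m := by omega
        rw [this]
        congr 1
        refine Finset.prod_congr rfl fun j _ => ?_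
        push_cast; ring
    rw [e1, e2, mul_inv, mul_assoc, inv_mul_cancel₀ h0, mul_one]

theorem aux_poch_ne (a : ℂ) (ha : ∀ m : ℤ, a ≠ m) (n : ℤ) : poch a n ≠ 0 := by
  unfold poch
  split_ifs
  · refine Finset.prod_ne_zero_iff.2 fun j _ h => ha (-j) ?_
    push_cast; linear_combination h
  · refine inv_ne_zero (Finset.prod_ne_zero_iff.2 fun j _ h => ha (-n-j) ?_)
    push_cast; linear_combination h

/-- ratio of prefactors -/
theorem aux_pre (a b : ℂ) (ha : ∀ m : ℤ, a ≠ m) (hb : ∀ m : ℤ, b ≠ m) (n : ℤ) :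
    poch a (n + 1) / poch b (n + 1) = poch a n / poch b n * ((a + n) / (b + n)) := by
  rw [aux_poch_succ a ha, aux_poch_succ b hb]
  have := aux_poch_ne b hb n
  rw [mul_div_mul_comm]

theorem aux_up (x s : ℂ) (j : ℕ) (h1 : x - j ≠ 0) (h2 : x + s ≠ 0) :
    poch (-(x + 1)) ((j + 1 : ℕ) : ℤ) * poch (x + 1 + s) ((j + 1 : ℕ) : ℤ)
     = poch (-x) (j : ℤ) * poch (x + s) (j : ℤ) *
       (-((x + 1) * (x + s + j + 1) * (x + s + j) / (x + s))) := by
  have e1 := aux_poch_nat_shift (-(x + 1)) j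
  have e2 := aux_poch_nat_shift (x + s) j
  rw [aux_poch_nat_succ, aux_poch_nat_succ]
  rw [show -(x+1) + 1 = -x by ring] at e1
  rw [show x + s + 1 = x + 1 + s by ring] at e2
  rw [e1]
  have e3 : poch (x + 1 + s) (j : ℤ) = poch (x + s) (j : ℤ) * (x + s + j) / (x + s) := by
    rw [eq_div_iff h2, e2]; ring
  rw [e3]
  field_simp
  ring

theorem aux_dn (x s : ℂ) (j : ℕ) (h1 : x ≠ 0) :
    poch (-(x - 1)) ((j + 1 : ℕ) : ℤ) * poch (x - 1 + s) ((j + 1 : ℕ) : ℤ)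
     = poch (-x) (j : ℤ) * poch (x + s) (j : ℤ) *
       ((x - j - 1) * (x - j) * (x - 1 + s) / (-x)) * (-1) * (-1) := by
  have e1 := aux_poch_nat_shift (-x) j
  have e2 := aux_poch_nat_shift (x - 1 + s) j
  rw [aux_poch_nat_succ, aux_poch_nat_succ]
  rw [show -x + 1 = -(x-1) by ring] at e1
  rw [show x - 1 + s + 1 = x + s by ring] at e2
  rw [e2]
  have e3 : poch (-(x-1)) (j : ℤ) = poch (-x) (j : ℤ) * (-x + j) / (-x) := by
    rw [eq_div_iff (neg_ne_zero.2 h1), e1]; ring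
  rw [e3]
  field_simp
  ring

theorem aux_sub_ne (a : ℂ) (ha : ∀ m : ℤ, a ≠ m) (m : ℤ) : a + m ≠ 0 := by
  intro h
  apply ha (-m)
  push_cast
  linear_combination h

theorem aux_rat0 (x α β : ℂ) (h1 : x + 1 ≠ 0) (h2 : x + α ≠ 0)
    (d0 : 2 * x + α + β ≠ 0) (d1 : 2 * x + α + β + 1 ≠ 0) (d2 : 2 * x + α + β + 2 ≠ 0) :
    (2 * (x + 1) * (x + α + β + 1) / ((2 * x + α + β + 1) * (2 * x + α + β + 2)))
        * ((x + α + 1) / (x + 1))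
    + ((β ^ 2 - α ^ 2) / ((2 * x + α + β) * (2 * x + α + β + 2)))
    + (2 * (x + α) * (x + β) / ((2 * x + α + β) * (2 * x + α + β + 1)))
        * (x / (x + α)) - 1 = 0 := by
  field_simp
  ring

theorem aux_rat1 (x α β j : ℂ) (h0 : x ≠ 0) (h1 : x + 1 ≠ 0) (h2 : x + α ≠ 0)
    (h3 : x + α + β + 1 ≠ 0)
    (d0 : 2 * x + α + β ≠ 0) (d1 : 2 * x + α + β + 1 ≠ 0) (d2 : 2 * x + α + β + 2 ≠ 0) :
    (2 * (x + 1) * (x + α + β + 1) / ((2 * x + α + β + 1) * (2 * x + α + β + 2)))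
        * ((x + α + 1) / (x + 1)) *
          (-((x + 1) * (x + (α + β + 1) + j + 1) * (x + (α + β + 1) + j) / (x + (α + β + 1))))
    + ((β ^ 2 - α ^ 2) / ((2 * x + α + β) * (2 * x + α + β + 2)) - 1)
        * ((-x + j) * (x + (α + β + 1) + j))
    + (2 * (x + α) * (x + β) / ((2 * x + α + β) * (2 * x + α + β + 1)))
        * (x / (x + α)) * ((x - j - 1) * (x - j) * (x - 1 + (α + β + 1)) / (-x))
     = -2 * (j + 1) * (α + 1 + j) := by
  rw [show x + (α + β + 1) = x + α + β + 1 by ring]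
  field_simp
  ring

theorem aux_good_swap {α β ε : ℂ} (h : GoodParams α β ε) : GoodParams β α ε := by
  intro m
  obtain ⟨a, b, c, d, e⟩ := h m
  exact ⟨a, c, b, by rwa [add_right_comm], by rwa [add_right_comm]⟩

theorem aux_good_dual {α β ε : ℂ} (h : GoodParams α β ε) :
    GoodParams (-α) (-β) (ε + α + β) := by
  intro m
  obtain ⟨a, b, c, d, e⟩ := h m
  refine ⟨d, ?_, ?_, ?_, ?_⟩
  · rwa [show ε + α + β + -α = ε + β by ring]
  · rwa [show ε + α + β + -β = ε + α by ring]
  · rwa [show ε + α + β + -α + -β = ε by ring]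
  · rwa [show 2 * (ε + α + β) + -α + -β = 2 * ε + α + β by ring]

theorem aux_L_dual (α β ε : ℂ) : jacobiLin (-α) (-β) (ε + α + β) = jacobiLin α β ε := by
  ext f n
  change jacobiL _ _ _ _ _ = jacobiL _ _ _ _ _
  unfold jacobiL
  have e : ∀ c : ℂ, 2 * (n : ℂ) + 2 * (ε + α + β) + -α + -β = 2 * n + 2 * ε + α + β := by
    intro c; ring
  rw [e 0]
  ring

theorem aux_psi_dual (α β ε : ℂ) (i : ℕ) :
    psiPd α β ε i = phiPd (-α) (-β) (ε + α + β) i := by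
  funext n
  unfold psiPd phiPd
  rw [show ε + α + β + -α + 1 = ε + β + 1 by ring,
    show (n : ℂ) + (ε + α + β) + -α + -β + 1 = n + ε + 1 by ring,
    show (n : ℂ) + (ε + α + β) = n + ε + α + β by ring]

theorem aux_shift_ne {a : ℂ} (h : ∀ m : ℤ, a ≠ m) : ∀ m : ℤ, a + 1 ≠ m := by
  intro m hm
  apply h (m - 1)
  push_cast
  linear_combination hm

theorem aux_phi_succ (α β ε : ℂ) (hg : GoodParams α β ε) (i : ℕ) (n : ℤ) :
    phiPd α β ε i (n + 1) = (poch (ε + α + 1) n / poch (ε + 1) n) *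
      (((n + ε) + α + 1) / ((n + ε) + 1)) *
      (poch (-((n + ε : ℂ) + 1)) (i : ℤ) * poch ((n + ε : ℂ) + 1 + (α + β + 1)) (i : ℤ)) /
      ((-2 : ℂ) ^ i * (i.factorial : ℂ) * poch (α + 1) (i : ℤ)) := by
  unfold phiPd
  rw [aux_pre _ _ (aux_shift_ne fun m => (hg m).2.1) (aux_shift_ne fun m => (hg m).1)]
  rw [show ε + α + 1 + (n : ℂ) = n + ε + α + 1 by ring, show ε + 1 + (n : ℂ) = n + ε + 1 by ring]
  push_cast
  rw [show (n : ℂ) + 1 + ε + α + β + 1 = n + ε + 1 + (α + β + 1) by ring,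
    show (n : ℂ) + 1 + ε = n + ε + 1 by ring]

theorem aux_phi_pred (α β ε : ℂ) (hg : GoodParams α β ε) (i : ℕ) (n : ℤ) :
    phiPd α β ε i (n - 1) = (poch (ε + α + 1) n / poch (ε + 1) n) *
      ((n + ε) / ((n + ε) + α)) *
      (poch (-((n + ε : ℂ) - 1)) (i : ℤ) * poch ((n + ε : ℂ) - 1 + (α + β + 1)) (i : ℤ)) /
      ((-2 : ℂ) ^ i * (i.factorial : ℂ) * poch (α + 1) (i : ℤ)) := by
  unfold phiPd
  have h := aux_pre _ _ (aux_shift_ne fun m => (hg m).2.1) (aux_shift_ne fun m => (hg m).1) (n - 1)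
  rw [sub_add_cancel] at h
  rw [h]
  push_cast
  have h1 : (n : ℂ) + ε ≠ 0 := by
    have := aux_sub_ne ε (fun m => (hg m).1) n
    rwa [add_comm]
  have h2 : (n : ℂ) + ε + α ≠ 0 := by
    have := aux_sub_ne (ε + α) (fun m => (hg m).2.1) n
    rwa [show (n : ℂ) + ε + α = ε + α + n by ring]
  rw [show ε + α + 1 + ((n : ℂ) - 1) = n + ε + α by ring,
    show ε + 1 + ((n : ℂ) - 1) = n + ε by ring]
  rw [show (n : ℂ) - 1 + ε + α + β + 1 = n + ε - 1 + (α + β + 1) by ring,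
    show (n : ℂ) - 1 + ε = n + ε - 1 by ring]
  congr 2
  rw [mul_assoc, div_mul_div_cancel₀ h1, div_self h2, mul_one]

theorem aux_phi0 (α β ε : ℂ) (hg : GoodParams α β ε) :
    (jacobiLin α β ε - 1 : Module.End ℂ (ℤ → ℂ)) (phiPd α β ε 0) = 0 := by
  funext n
  change jacobiL α β ε (phiPd α β ε 0) n - phiPd α β ε 0 n = 0
  unfold jacobiL
  rw [aux_phi_succ α β ε hg, aux_phi_pred α β ε hg]
  unfold phiPd
  have g1 := aux_sub_ne ε (fun m => (hg m).1) (n + 1)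
  have g2 := aux_sub_ne (ε + α) (fun m => (hg m).2.1) n
  have d0 := aux_sub_ne (2 * ε + α + β) (fun m => (hg m).2.2.2.2) (2 * n)
  have d1 := aux_sub_ne (2 * ε + α + β) (fun m => (hg m).2.2.2.2) (2 * n + 1)
  have d2 := aux_sub_ne (2 * ε + α + β) (fun m => (hg m).2.2.2.2) (2 * n + 2)
  push_cast at g1 g2 d0 d1 d2
  have R := aux_rat0 (n + ε) α β (by convert g1 using 1; ring) (by convert g2 using 1; ring)
    (by convert d0 using 1; ring) (by convert d1 using 1; ring) (by convert d2 using 1; ring)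
  rw [show 2 * ((n : ℂ) + ε) + α + β = 2 * n + 2 * ε + α + β by ring] at R
  have hz : ∀ a, poch a ((0 : ℕ) : ℤ) = 1 := by intro a; simp [poch]
  simp only [hz, pow_zero, Nat.factorial_zero, Nat.cast_one, mul_one, div_one]
  linear_combination (poch (ε + α + 1) n / poch (ε + 1) n) * R

theorem aux_phi_step (α β ε : ℂ) (hg : GoodParams α β ε) (j : ℕ)
    (hα : poch (α + 1) ((j + 1 : ℕ) : ℤ) ≠ 0) :
    (jacobiLin α β ε - 1 : Module.End ℂ (ℤ → ℂ)) (phiPd α β ε (j + 1)) = phiPd α β ε j := by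
  funext n
  change jacobiL α β ε (phiPd α β ε (j + 1)) n - phiPd α β ε (j + 1) n = _
  unfold jacobiL
  rw [aux_phi_succ α β ε hg, aux_phi_pred α β ε hg]
  unfold phiPd
  have g0 := aux_sub_ne ε (fun m => (hg m).1) n
  have gj := aux_sub_ne ε (fun m => (hg m).1) (n - j)
  have g1 := aux_sub_ne ε (fun m => (hg m).1) (n + 1)
  have g2 := aux_sub_ne (ε + α) (fun m => (hg m).2.1) n
  have g3 := aux_sub_ne (ε + α + β) (fun m => (hg m).2.2.2.1) (n + 1)
  have d0 := aux_sub_ne (2 * ε + α + β) (fun m => (hg m).2.2.2.2) (2 * n)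
  have d1 := aux_sub_ne (2 * ε + α + β) (fun m => (hg m).2.2.2.2) (2 * n + 1)
  have d2 := aux_sub_ne (2 * ε + α + β) (fun m => (hg m).2.2.2.2) (2 * n + 2)
  push_cast at g0 gj g1 g2 g3 d0 d1 d2
  have h0 : (n : ℂ) + ε ≠ 0 := by convert g0 using 1; ring
  have h3 : (n : ℂ) + ε + α + β + 1 ≠ 0 := by convert g3 using 1; ring
  have R := aux_rat1 (n + ε) α β j h0 (by convert g1 using 1; ring) (by convert g2 using 1; ring) h3
    (by convert d0 using 1; ring) (by convert d1 using 1; ring) (by convert d2 using 1; ring)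
  rw [show 2 * ((n : ℂ) + ε) + α + β = 2 * n + 2 * ε + α + β by ring] at R
  rw [aux_up (n + ε) (α + β + 1) j (by convert gj using 1; ring) (by convert h3 using 1; ring),
    aux_dn (n + ε) (α + β + 1) j h0]
  rw [show (n : ℂ) + ε + α + β + 1 = n + ε + (α + β + 1) by ring] at R ⊢
  rw [aux_poch_nat_succ (-((n : ℂ) + ε)), aux_poch_nat_succ ((n : ℂ) + ε + (α + β + 1))]
  rw [aux_poch_nat_succ] at hα ⊢
  have hα0 := left_ne_zero_of_mul hα
  have hα1 := right_ne_zero_of_mul hα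
  have hf : (j.factorial : ℂ) ≠ 0 := by exact_mod_cast j.factorial_ne_zero
  have hj : (j : ℂ) + 1 ≠ 0 := by exact_mod_cast j.succ_ne_zero
  have h2 : (-2 : ℂ) ^ j ≠ 0 := pow_ne_zero _ (by norm_num)
  rw [pow_succ, Nat.factorial_succ]
  push_cast
  generalize poch (-((n : ℂ) + ε)) (j : ℤ) = P at *
  generalize poch ((n : ℂ) + ε + (α + β + 1)) (j : ℤ) = Q at *
  generalize poch (ε + α + 1) n / poch (ε + 1) n = A at *
  generalize poch (α + 1) (j : ℤ) = B at *
  generalize (-2 : ℂ) ^ j = C at *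
  generalize (j.factorial : ℂ) = F at *
  have e : A * (P * Q) / (C * F * B) = A * (P * Q) / (C * -2 * ((j + 1) * F) * (B * (α + 1 + j))) *
      (-2 * (j + 1) * (α + 1 + j)) := by
    field_simp
  rw [e, ← R]
  ring

theorem aux_chain {V : Type*} [AddCommGroup V] [Module ℂ V] (T : Module.End ℂ V) (u v : ℕ → V)
    (k : ℕ) (hu0 : T (u 0) = 0) (hv0 : T (v 0) = 0)
    (hu : ∀ i, i + 1 < k → T (u (i + 1)) = u i) (hv : ∀ i, i + 1 < k → T (v (i + 1)) = v i)
    (hker : ∀ f, T f = 0 → ∃ a b : ℂ, f = a • u 0 + b • v 0) :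
    LinearMap.ker (T ^ k) = Submodule.span ℂ {g | ∃ i < k, g = u i ∨ g = v i} := by
  have key : ∀ m ≤ k, LinearMap.ker (T ^ m) = Submodule.span ℂ {g | ∃ i < m, g = u i ∨ g = v i} := by
    intro m
    induction m with
    | zero =>
      intro _
      have : {g | ∃ i < 0, g = u i ∨ g = v i} = (∅ : Set V) := by ext; simp
      rw [this, Submodule.span_empty, pow_zero]
      ext; simp
    | succ m ih =>
      intro hm
      have ih := ih (by omega)
      apply le_antisymm
      · intro f hf
        have hTf : T f ∈ LinearMap.ker (T ^ m) := by
          rw [LinearMap.mem_ker] at hf ⊢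
          rwa [pow_succ] at hf
        rw [ih] at hTf
        have : Submodule.span ℂ {g | ∃ i < m, g = u i ∨ g = v i} ≤
            (Submodule.span ℂ {g | ∃ i < m + 1, g = u i ∨ g = v i}).map T := by
          rw [Submodule.span_le]
          rintro g ⟨i, hi, rfl | rfl⟩
          · exact ⟨u (i + 1), Submodule.subset_span ⟨i + 1, by omega, Or.inl rfl⟩, hu i (by omega)⟩
          · exact ⟨v (i + 1), Submodule.subset_span ⟨i + 1, by omega, Or.inr rfl⟩, hv i (by omega)⟩
        obtain ⟨g, hg, hgf⟩ := this hTf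
        obtain ⟨a, b, hab⟩ := hker (f - g) (by rw [map_sub, hgf, sub_self])
        rw [← sub_add_cancel f g, hab]
        refine Submodule.add_mem _ (Submodule.add_mem _ (Submodule.smul_mem _ _ ?_)
          (Submodule.smul_mem _ _ ?_)) hg
        · exact Submodule.subset_span ⟨0, by omega, Or.inl rfl⟩
        · exact Submodule.subset_span ⟨0, by omega, Or.inr rfl⟩
      · rw [Submodule.span_le]
        have step : ∀ g, T g ∈ LinearMap.ker (T ^ m) → g ∈ LinearMap.ker (T ^ (m + 1)) := by
          intro g hg
          rw [LinearMap.mem_ker] at hg ⊢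
          rwa [pow_succ]
        rintro g ⟨i, hi, rfl | rfl⟩
        · apply step
          rcases i with _ | i
          · rw [hu0]; exact Submodule.zero_mem _
          · rw [hu i (by omega), ih]
            exact Submodule.subset_span ⟨i, by omega, Or.inl rfl⟩
        · apply step
          rcases i with _ | i
          · rw [hv0]; exact Submodule.zero_mem _
          · rw [hv i (by omega), ih]
            exact Submodule.subset_span ⟨i, by omega, Or.inr rfl⟩
  exact key k le_rfl

theorem aux_zero (α β ε : ℂ) (hg : GoodParams α β ε) (f : ℤ → ℂ)
    (hf : (jacobiLin α β ε - 1 : Module.End ℂ (ℤ → ℂ)) f = 0) (h0 : f 0 = 0) (h1 : f 1 = 0) :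
    f = 0 := by
  have hrec : ∀ n : ℤ, jacobiL α β ε f n - f n = 0 := fun n => congrFun hf n
  have d : ∀ m : ℤ, 2 * (m : ℂ) + 2 * ε + α + β ≠ 0 ∧ 2 * (m : ℂ) + 2 * ε + α + β + 1 ≠ 0 ∧
      2 * (m : ℂ) + 2 * ε + α + β + 2 ≠ 0 := by
    intro n
    have d0 := aux_sub_ne (2 * ε + α + β) (fun m => (hg m).2.2.2.2) (2 * n)
    have d1 := aux_sub_ne (2 * ε + α + β) (fun m => (hg m).2.2.2.2) (2 * n + 1)
    have d2 := aux_sub_ne (2 * ε + α + β) (fun m => (hg m).2.2.2.2) (2 * n + 2)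
    push_cast at d0 d1 d2
    exact ⟨by convert d0 using 1; ring, by convert d1 using 1; ring, by convert d2 using 1; ring⟩
  have up : ∀ n : ℤ, f (n - 1) = 0 → f n = 0 → f (n + 1) = 0 := by
    intro n ha hb
    have r := hrec n
    unfold jacobiL at r
    rw [ha, hb, mul_zero, mul_zero, add_zero, add_zero, sub_zero] at r
    refine (mul_eq_zero.1 r).resolve_left ?_
    have g1 := aux_sub_ne ε (fun m => (hg m).1) (n + 1)
    have g3 := aux_sub_ne (ε + α + β) (fun m => (hg m).2.2.2.1) (n + 1)
    push_cast at g1 g3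
    refine div_ne_zero (mul_ne_zero (mul_ne_zero two_ne_zero ?_) ?_)
      (mul_ne_zero (d n).2.1 (d n).2.2)
    · convert g1 using 1; ring
    · convert g3 using 1; ring
  have dn : ∀ n : ℤ, f (n + 1) = 0 → f n = 0 → f (n - 1) = 0 := by
    intro n ha hb
    have r := hrec n
    unfold jacobiL at r
    rw [ha, hb, mul_zero, mul_zero, add_zero, zero_add, sub_zero] at r
    refine (mul_eq_zero.1 r).resolve_left ?_
    have g1 := aux_sub_ne (ε + α) (fun m => (hg m).2.1) n
    have g3 := aux_sub_ne (ε + β) (fun m => (hg m).2.2.1) n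
    refine div_ne_zero (mul_ne_zero (mul_ne_zero two_ne_zero ?_) ?_)
      (mul_ne_zero (d n).1 (d n).2.1)
    · convert g1 using 1; ring
    · convert g3 using 1; ring
  have all : ∀ n : ℤ, f n = 0 ∧ f (n + 1) = 0 := by
    intro n
    induction n using Int.induction_on with
    | zero => exact ⟨h0, by simpa using h1⟩
    | succ i ih => exact ⟨ih.2, up _ (by simpa using ih.1) ih.2⟩
    | pred i ih => exact ⟨dn _ ih.2 ih.1, by simpa using ih.1⟩
  funext n
  exact (all n).1

theorem aux_psi0 (α β ε : ℂ) (hg : GoodParams α β ε) :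
    (jacobiLin α β ε - 1 : Module.End ℂ (ℤ → ℂ)) (psiPd α β ε 0) = 0 := by
  rw [aux_psi_dual, ← aux_L_dual]
  exact aux_phi0 _ _ _ (aux_good_dual hg)

theorem aux_psi_step (α β ε : ℂ) (hg : GoodParams α β ε) (j : ℕ)
    (hα : poch (-α + 1) ((j + 1 : ℕ) : ℤ) ≠ 0) :
    (jacobiLin α β ε - 1 : Module.End ℂ (ℤ → ℂ)) (psiPd α β ε (j + 1)) = psiPd α β ε j := by
  rw [aux_psi_dual, aux_psi_dual, ← aux_L_dual]
  exact aux_phi_step _ _ _ (aux_good_dual hg) j hα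

theorem aux_ker (α β ε : ℂ) (hg : GoodParams α β ε) (hα : α ≠ 0) (f : ℤ → ℂ)
    (hf : (jacobiLin α β ε - 1 : Module.End ℂ (ℤ → ℂ)) f = 0) :
    ∃ a b : ℂ, f = a • phiPd α β ε 0 + b • psiPd α β ε 0 := by
  have p0 : phiPd α β ε 0 0 = 1 := by simp [phiPd, poch]
  have q0 : psiPd α β ε 0 0 = 1 := by simp [psiPd, poch]
  have p1 : phiPd α β ε 0 1 = (ε + α + 1) / (ε + 1) := by simp [phiPd, poch]
  have q1 : psiPd α β ε 0 1 = (ε + β + 1) / (ε + α + β + 1) := by simp [psiPd, poch]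
  have g1 := aux_sub_ne ε (fun m => (hg m).1) 1
  have g3 := aux_sub_ne (ε + α + β) (fun m => (hg m).2.2.2.1) 1
  have d2 := aux_sub_ne (2 * ε + α + β) (fun m => (hg m).2.2.2.2) 2
  push_cast at g1 g3 d2
  have hD : phiPd α β ε 0 1 - psiPd α β ε 0 1 ≠ 0 := by
    have : phiPd α β ε 0 1 - psiPd α β ε 0 1 =
        α * (2 * ε + α + β + 2) / ((ε + 1) * (ε + α + β + 1)) := by
      rw [p1, q1]
      field_simp
      ring
    rw [this]
    exact div_ne_zero (mul_ne_zero hα d2) (mul_ne_zero g1 g3)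
  set D := phiPd α β ε 0 1 - psiPd α β ε 0 1 with hDdef
  let a := (f 1 - f 0 * psiPd α β ε 0 1) / D
  refine ⟨a, f 0 - a, ?_⟩
  rw [← sub_eq_zero]
  apply aux_zero α β ε hg
  · rw [map_sub, map_add, map_smul, map_smul, hf, aux_phi0 _ _ _ hg, aux_psi0 _ _ _ hg]
    simp
  · simp [p0, q0]
  · have : a * D = f 1 - f 0 * psiPd α β ε 0 1 := div_mul_cancel₀ _ hD
    simp only [Pi.sub_apply, Pi.add_apply, Pi.smul_apply, smul_eq_mul]
    rw [hDdef] at this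
    linear_combination -this

theorem aux_poch_int {α : ℂ} {k : ℕ} (h : ∀ m : ℤ, α = (m : ℂ) → (k : ℤ) ≤ |m|) (i : ℕ)
    (hi : i < k) : poch (α + 1) (i : ℤ) ≠ 0 := by
  rw [aux_poch_nat]
  refine Finset.prod_ne_zero_iff.2 fun j hj h0 => ?_
  have := h (-(j + 1)) (by push_cast; linear_combination h0)
  rw [Finset.mem_range] at hj
  rw [abs_neg, abs_of_nonneg (by omega)] at this
  omega

theorem aux_neg_int {α : ℂ} {k : ℕ} (h : ∀ m : ℤ, α = (m : ℂ) → (k : ℤ) ≤ |m|) :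
    ∀ m : ℤ, -α = (m : ℂ) → (k : ℤ) ≤ |m| := by
  intro m hm
  rw [← abs_neg]
  exact h (-m) (by push_cast; rw [← hm, neg_neg])

theorem aux_ne_zero {α : ℂ} {k : ℕ} (hk : 1 ≤ k)
    (h : ∀ m : ℤ, α = (m : ℂ) → (k : ℤ) ≤ |m|) : α ≠ 0 := by
  intro h0
  have := h 0 (by simpa using h0)
  simp at this
  omega

/-- multiplication by a sign -/
noncomputable def auxM (f : ℤ → ℂ) : ℤ → ℂ := fun n => (-1 : ℂ) ^ n * f n

theorem aux_LM (α β ε : ℂ) (f : ℤ → ℂ) :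
    (jacobiLin α β ε + 1 : Module.End ℂ (ℤ → ℂ)) (auxM f) =
      - auxM ((jacobiLin β α ε - 1 : Module.End ℂ (ℤ → ℂ)) f) := by
  funext n
  change jacobiL α β ε (auxM f) n + auxM f n =
    -((-1 : ℂ) ^ n * (jacobiL β α ε f n - f n))
  unfold jacobiL auxM
  rw [zpow_add₀ (by norm_num), zpow_sub₀ (by norm_num), zpow_one,
    show 2 * (n : ℂ) + 2 * ε + β + α = 2 * n + 2 * ε + α + β by ring]
  ring

theorem aux_MM (f : ℤ → ℂ) : auxM (auxM f) = f := by
  funext n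
  unfold auxM
  rw [← mul_assoc, ← mul_zpow]
  simp

theorem aux_M_smul (c : ℂ) (f : ℤ → ℂ) : auxM (c • f) = c • auxM f := by
  funext n
  simp only [auxM, Pi.smul_apply, smul_eq_mul]
  ring

theorem aux_M_add (f g : ℤ → ℂ) : auxM (f + g) = auxM f + auxM g := by
  funext n
  simp only [auxM, Pi.add_apply]
  ring

theorem aux_neg_two (i : ℕ) : ((-2 : ℂ) ^ i) = (-1) ^ i * 2 ^ i := by
  rw [← mul_pow]; norm_num

theorem aux_sgn (i : ℕ) : ((-1 : ℂ) ^ i)⁻¹ = (-1) ^ i := by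
  rw [← inv_pow]; norm_num

theorem aux_phiM (α β ε : ℂ) (i : ℕ) : phiMd α β ε i = (-1 : ℂ) ^ i • auxM (phiPd β α ε i) := by
  funext n
  simp only [phiMd, auxM, phiPd, Pi.smul_apply, smul_eq_mul]
  rw [aux_neg_two, show (n : ℂ) + ε + β + α + 1 = n + ε + α + β + 1 by ring]
  simp only [div_eq_mul_inv, mul_inv, aux_sgn]
  have : (-1 : ℂ) ^ i * (-1 : ℂ) ^ i = 1 := by rw [← mul_pow]; simp
  generalize (-1 : ℂ) ^ i = s at *
  linear_combination (-((-1 : ℂ) ^ n * (poch (ε + β + 1) n * (poch (ε + 1) n)⁻¹) *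
    (poch (-((n : ℂ) + ε)) (i : ℤ) * poch ((n : ℂ) + ε + α + β + 1) (i : ℤ)) *
      (((2 : ℂ) ^ i)⁻¹ * (i.factorial : ℂ)⁻¹ * (poch (β + 1) (i : ℤ))⁻¹))) * this

theorem aux_psiM (α β ε : ℂ) (i : ℕ) : psiMd α β ε i = (-1 : ℂ) ^ i • auxM (psiPd β α ε i) := by
  funext n
  simp only [psiMd, auxM, psiPd, Pi.smul_apply, smul_eq_mul]
  rw [aux_neg_two, show (n : ℂ) + ε + β + α = n + ε + α + β by ring,
    show ε + β + α + 1 = ε + α + β + 1 by ring]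
  simp only [div_eq_mul_inv, mul_inv, aux_sgn]
  have : (-1 : ℂ) ^ i * (-1 : ℂ) ^ i = 1 := by rw [← mul_pow]; simp
  generalize (-1 : ℂ) ^ i = s at *
  linear_combination (-((-1 : ℂ) ^ n * (poch (ε + α + 1) n * (poch (ε + α + β + 1) n)⁻¹) *
    (poch (-((n : ℂ) + ε + α + β)) (i : ℤ) * poch ((n : ℂ) + ε + 1) (i : ℤ)) *
      (((2 : ℂ) ^ i)⁻¹ * (i.factorial : ℂ)⁻¹ * (poch (-β + 1) (i : ℤ))⁻¹))) * this

theorem aux_M_zero : auxM 0 = 0 := by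
  funext n
  simp [auxM]

theorem aux_plus (α β ε : ℂ) (hg : GoodParams α β ε) (k : ℕ) (hk : 1 ≤ k)
    (hkα : ∀ m : ℤ, α = (m : ℂ) → (k : ℤ) ≤ |m|) :
    LinearMap.ker ((jacobiLin α β ε - 1 : Module.End ℂ (ℤ → ℂ)) ^ k) =
      Submodule.span ℂ {g : ℤ → ℂ | ∃ i < k, g = phiPd α β ε i ∨ g = psiPd α β ε i} := by
  apply aux_chain
  · exact aux_phi0 _ _ _ hg
  · exact aux_psi0 _ _ _ hg
  · intro i hi
    exact aux_phi_step _ _ _ hg i (aux_poch_int hkα _ hi)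
  · intro i hi
    exact aux_psi_step _ _ _ hg i (aux_poch_int (aux_neg_int hkα) _ hi)
  · exact aux_ker _ _ _ hg (aux_ne_zero hk hkα)

theorem aux_minus (α β ε : ℂ) (hg : GoodParams α β ε) (l : ℕ) (hl : 1 ≤ l)
    (hlβ : ∀ m : ℤ, β = (m : ℂ) → (l : ℤ) ≤ |m|) :
    LinearMap.ker ((jacobiLin α β ε + 1 : Module.End ℂ (ℤ → ℂ)) ^ l) =
      Submodule.span ℂ {g : ℤ → ℂ | ∃ i < l, g = phiMd α β ε i ∨ g = psiMd α β ε i} := by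
  have hs := aux_good_swap hg
  apply aux_chain
  · rw [aux_phiM, map_smul, aux_LM, aux_phi0 _ _ _ hs, aux_M_zero, neg_zero, smul_zero]
  · rw [aux_psiM, map_smul, aux_LM, aux_psi0 _ _ _ hs, aux_M_zero, neg_zero, smul_zero]
  · intro i hi
    rw [aux_phiM, map_smul, aux_LM, aux_phi_step _ _ _ hs i (aux_poch_int hlβ _ hi), aux_phiM,
      pow_succ]
    simp
  · intro i hi
    rw [aux_psiM, map_smul, aux_LM,
      aux_psi_step _ _ _ hs i (aux_poch_int (aux_neg_int hlβ) _ hi), aux_psiM, pow_succ]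
    simp
  · intro f hf
    have h := aux_LM α β ε (auxM f)
    rw [aux_MM, hf] at h
    have h' := congrArg auxM (neg_eq_zero.1 h.symm)
    rw [aux_MM, aux_M_zero] at h'
    obtain ⟨a, b, hab⟩ := aux_ker _ _ _ hs (aux_ne_zero hl hlβ) _ h'
    refine ⟨a, b, ?_⟩
    rw [← aux_MM f, hab, aux_M_add, aux_M_smul, aux_M_smul, aux_phiM, aux_psiM]
    simp

/-- The kernels of `(L-1)^k` and `(L+1)^l` intersect trivially,
and the kernel of the composite `(L-1)^k ∘ (L+1)^l` is their (direct) sum,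
namely the span of the `2(k+l)` functions `φ₊^{(i)}, ψ₊^{(i)}, φ₋^{(j)}, ψ₋^{(j)}`. -/
theorem stmt5 (α β ε : ℂ) (hgood : GoodParams α β ε) (k l : ℕ)
    (hk : 1 ≤ k) (hl : 1 ≤ l)
    (hkα : ∀ m : ℤ, α = (m : ℂ) → (k : ℤ) ≤ |m|)
    (hlβ : ∀ m : ℤ, β = (m : ℂ) → (l : ℤ) ≤ |m|) :
    LinearMap.ker ((jacobiLin α β ε - 1 : Module.End ℂ (ℤ → ℂ)) ^ k) ⊓
      LinearMap.ker ((jacobiLin α β ε + 1 : Module.End ℂ (ℤ → ℂ)) ^ l) = ⊥ ∧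
    LinearMap.ker (((jacobiLin α β ε - 1 : Module.End ℂ (ℤ → ℂ)) ^ k) *
        ((jacobiLin α β ε + 1 : Module.End ℂ (ℤ → ℂ)) ^ l))
      = LinearMap.ker ((jacobiLin α β ε - 1 : Module.End ℂ (ℤ → ℂ)) ^ k) ⊔
        LinearMap.ker ((jacobiLin α β ε + 1 : Module.End ℂ (ℤ → ℂ)) ^ l) ∧
    LinearMap.ker (((jacobiLin α β ε - 1 : Module.End ℂ (ℤ → ℂ)) ^ k) *
        ((jacobiLin α β ε + 1 : Module.End ℂ (ℤ → ℂ)) ^ l))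
      = Submodule.span ℂ {g : ℤ → ℂ |
          (∃ i < k, g = phiPd α β ε i ∨ g = psiPd α β ε i) ∨
          (∃ j < l, g = phiMd α β ε j ∨ g = psiMd α β ε j)} := by
  classical
  set T := jacobiLin α β ε with hT
  let p : Polynomial ℂ := (Polynomial.X - 1) ^ k
  let q : Polynomial ℂ := (Polynomial.X + 1) ^ l
  have hpq : IsCoprime p q := by
    apply IsCoprime.pow
    refine ⟨Polynomial.C (-1 / 2), Polynomial.C (1 / 2), ?_⟩
    have e : Polynomial.C (-1 / 2 : ℂ) = -Polynomial.C (1 / 2) := by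
      rw [← Polynomial.C_neg]; congr 1; ring
    have e2 : Polynomial.C (1 / 2 : ℂ) * 2 = 1 := by
      rw [show (2 : Polynomial ℂ) = Polynomial.C 2 from rfl, ← Polynomial.C_mul]
      norm_num
    rw [e]
    linear_combination e2
  have hp : Polynomial.aeval T p = (T - 1) ^ k := by simp [p]
  have hq : Polynomial.aeval T q = (T + 1) ^ l := by simp [q]
  have h1 := Polynomial.disjoint_ker_aeval_of_isCoprime T hpq
  have h2 := Polynomial.sup_ker_aeval_eq_ker_aeval_mul_of_coprime T hpq
  rw [map_mul, hp, hq] at h2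
  rw [hp, hq] at h1
  refine ⟨h1.eq_bot, h2.symm, ?_⟩
  rw [← h2, hT, aux_plus α β ε hgood k hk hkα, aux_minus α β ε hgood l hl hlβ,
    ← Submodule.span_union]
  rfl
end

section
/- Assume α ∈ ℤ and let i be an integer with 0 ≤ i ≤ |α|−1. Then there exist rational functions u, v ∈ ℂ(X) such that for all n ∈ ℤ: u(n) = ((−(n+ε))_i·(n+ε+α+β+1)_i)/((−2)^i·i!·(α+1)_i) and v(n) = ((ε+β+1)_n·(ε+1)_n/((ε+α+1)_n·(ε+α+β+1)_n))·((−(n+ε+α+β))_i·(n+ε+1)_i)/((−2)^i·i!·(−α+1)_i), and moreover u(X) = u(−X−2ε−α−β−1) and v(X) = v(−X−2ε−α−β−1) as identities in ℂ(X). -/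
open Polynomial in
noncomputable def QQ (c : ℂ) (m : ℕ) : Polynomial ℂ :=
  ∏ j ∈ Finset.range m, (X + C (c + (j : ℂ)))

open Polynomial in
noncomputable def PP (c : ℂ) (m : ℕ) : Polynomial ℂ :=
  ∏ j ∈ Finset.range m, (C ((j : ℂ) - c) - X)

open Polynomial in
lemma PP_comp (c s d : ℂ) (m : ℕ) (h : d = s - c) :
    (PP c m).comp (-X - C s) = QQ d m := by
  subst h
  unfold PP QQ
  rw [Polynomial.prod_comp]
  refine Finset.prod_congr rfl fun j _ => ?_
  simp only [sub_comp, C_comp, X_comp, C_add, C_sub]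
  ring

open Polynomial in
lemma QQ_comp (c s d : ℂ) (m : ℕ) (h : d = s - c) :
    (QQ c m).comp (-X - C s) = PP d m := by
  subst h
  unfold PP QQ
  rw [Polynomial.prod_comp]
  refine Finset.prod_congr rfl fun j _ => ?_
  simp only [add_comp, C_comp, X_comp, C_add, C_sub]
  ring

open Polynomial in
lemma PP_eq (c d : ℂ) (m : ℕ) (h : d = 1 - m + c) : PP c m = (-1) ^ m * QQ d m := by
  subst h
  unfold PP QQ
  rw [← Finset.prod_range_reflect, ← Finset.card_range m, ← Finset.prod_const,
    Finset.card_range, ← Finset.prod_mul_distrib]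
  refine Finset.prod_congr rfl fun j hj => ?_
  have hj' := Finset.mem_range.1 hj
  have : ((m - 1 - j : ℕ) : ℂ) = m - 1 - j := by
    rw [Nat.cast_sub (by omega), Nat.cast_sub (by omega)]; simp
  rw [this]
  simp only [C_add, C_sub]
  ring

open Polynomial in
lemma QQ_comp2 (c s d : ℂ) (m : ℕ) (h : c + d = s + 1 - m) :
    (QQ c m * QQ d m).comp (-X - C s) = QQ c m * QQ d m := by
  rw [mul_comp, QQ_comp c s _ m rfl, QQ_comp d s _ m rfl,
    PP_eq (s - c) d m (by linear_combination h), PP_eq (s - d) c m (by linear_combination h)]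
  have : ((-1 : Polynomial ℂ) ^ m) * (-1) ^ m = 1 := by rw [← mul_pow]; simp
  linear_combination (QQ c m * QQ d m) * this

lemma QQ_eval (c x : ℂ) (m : ℕ) : (QQ c m).eval x = ∏ j ∈ Finset.range m, (x + c + (j : ℂ)) := by
  simp [QQ, Polynomial.eval_prod, add_assoc]

lemma poch_nat (c : ℂ) (m : ℕ) : poch c (m : ℤ) = ∏ j ∈ Finset.range m, (c + (j : ℂ)) := by
  simp [poch]

lemma PP_eval (c x : ℂ) (m : ℕ) : (PP c m).eval x = poch (-(x + c)) m := by
  rw [poch_nat]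
  simp only [PP, Polynomial.eval_prod]
  refine Finset.prod_congr rfl fun j _ => ?_
  simp; ring

lemma QQ_eval' (c x : ℂ) (m : ℕ) : (QQ c m).eval x = poch (x + c) m := by
  rw [poch_nat, QQ_eval]

lemma poch_neg (c : ℂ) (k : ℕ) :
    poch c (-(k : ℤ)) = (∏ j ∈ Finset.range k, (c - k + (j : ℂ)))⁻¹ := by
  rcases Nat.eq_zero_or_pos k with rfl | hk
  · simp [poch]
  · rw [poch, if_neg (by omega)]
    simp [sub_eq_add_neg]

lemma poch_succ (c : ℂ) (hc : ∀ m : ℤ, c ≠ m) (n : ℤ) :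
    poch c (n + 1) = poch c n * (c + n) := by
  rcases lt_or_ge n 0 with h | h
  · obtain ⟨k, rfl⟩ : ∃ k : ℕ, n = -((k + 1 : ℕ) : ℤ) := ⟨(-n - 1).toNat, by omega⟩
    rw [show -((k + 1 : ℕ) : ℤ) + 1 = -(k : ℤ) by push_cast; ring, poch_neg, poch_neg,
      Finset.prod_range_succ']
    have h0 : c + ((-((k + 1 : ℕ) : ℤ) : ℤ) : ℂ) ≠ 0 := by
      intro h
      apply hc ((k + 1 : ℕ) : ℤ)
      push_cast at h ⊢
      linear_combination h
    have e : ∏ j ∈ Finset.range k, (c - ((k + 1 : ℕ) : ℂ) + ((j + 1 : ℕ) : ℂ))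
        = ∏ j ∈ Finset.range k, (c - (k : ℂ) + (j : ℂ)) := by
      refine Finset.prod_congr rfl fun j _ => ?_
      push_cast; ring
    rw [e, mul_inv]
    have e2 : c - ((k + 1 : ℕ) : ℂ) + ((0 : ℕ) : ℂ) = c + ((-((k + 1 : ℕ) : ℤ) : ℤ) : ℂ) := by
      push_cast; ring
    rw [e2, mul_assoc, inv_mul_cancel₀ h0, mul_one]
  · obtain ⟨k, rfl⟩ := Int.eq_ofNat_of_zero_le h
    rw [show (k : ℤ) + 1 = ((k + 1 : ℕ) : ℤ) by push_cast; ring, poch_nat, poch_nat,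
      Finset.prod_range_succ]
    simp

lemma add_ne (c : ℂ) (hc : ∀ m : ℤ, c ≠ m) (n : ℤ) : c + n ≠ 0 := by
  intro h
  apply hc (-n)
  push_cast
  linear_combination h

lemma poch_ne (c : ℂ) (hc : ∀ m : ℤ, c ≠ m) (n : ℤ) : poch c n ≠ 0 := by
  induction n using Int.induction_on with
  | zero => simp [poch]
  | succ k ih => rw [poch_succ c hc]; exact mul_ne_zero ih (add_ne c hc _)
  | pred k ih =>
    have := poch_succ c hc (-(k : ℤ) - 1)
    rw [sub_add_cancel] at this
    rw [this] at ih
    exact left_ne_zero_of_mul ih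

lemma QQ_ne (c : ℂ) (hc : ∀ m : ℤ, c ≠ m) (m : ℕ) (n : ℤ) : (QQ c m).eval (n : ℂ) ≠ 0 := by
  rw [QQ_eval, Finset.prod_ne_zero_iff]
  intro j _
  have := add_ne c hc (n + j)
  push_cast at this
  intro h
  apply this
  linear_combination h

lemma QQ_shift (c x : ℂ) (m : ℕ) :
    (x + c) * (QQ c m).eval (x + 1) = (QQ c m).eval x * (x + c + m) := by
  rw [QQ_eval, QQ_eval, ← Finset.prod_range_succ, Finset.prod_range_succ', mul_comm]
  congr 1
  · refine Finset.prod_congr rfl fun j _ => ?_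
    push_cast; ring
  · simp

lemma poch_ratio (c d : ℂ) (hc : ∀ m : ℤ, c ≠ m) (m : ℕ) (hd : d = c + m) (n : ℤ) :
    poch c n * (QQ c m).eval (n : ℂ) = (QQ c m).eval 0 * poch d n := by
  have hd' : ∀ k : ℤ, d ≠ k := by
    intro k h
    apply hc (k - m)
    push_cast
    linear_combination h - hd
  have key : ∀ n : ℤ, (poch c n * (QQ c m).eval (n : ℂ) = (QQ c m).eval 0 * poch d n) ↔
      (poch c (n+1) * (QQ c m).eval ((n + 1 : ℤ) : ℂ) = (QQ c m).eval 0 * poch d (n+1)) := by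
    intro n
    have h1 := QQ_shift c n m
    have h2 := add_ne d hd' n
    rw [poch_succ c hc, poch_succ d hd']
    push_cast
    constructor
    · intro h
      rw [hd] at h ⊢
      linear_combination (poch c n) * h1 + (c + m + n) * h
    · intro h
      apply mul_right_cancel₀ h2
      rw [hd] at h ⊢
      linear_combination h - (poch c n) * h1
  induction n using Int.induction_on with
  | zero => simp [poch]
  | succ k ih => exact (key _).1 ih
  | pred k ih =>
    apply (key _).2
    rw [sub_add_cancel]
    exact ih

/-- For `α ∈ ℤ` and `0 ≤ i ≤ |α|−1`, the functions
`Φ₊^{(i)}` and `Ψ₊^{(i)}` are restrictions to `ℤ` of `I`-invariant rational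
functions (`I`-invariance stated in cross-multiplied polynomial form). -/
theorem stmt16 (α β ε : ℂ) (hgood : GoodParams α β ε)
    (a : ℤ) (hα : α = (a : ℂ)) (i : ℕ) (hi : (i : ℤ) ≤ |a| - 1) :
    ∃ uN uD vN vD : Polynomial ℂ,
      (∀ n : ℤ, uD.eval (n : ℂ) ≠ 0) ∧ (∀ n : ℤ, vD.eval (n : ℂ) ≠ 0) ∧
      (∀ n : ℤ, uN.eval (n : ℂ) / uD.eval (n : ℂ)
        = (poch (-((n : ℂ) + ε)) (i : ℤ) * poch ((n : ℂ) + ε + α + β + 1) (i : ℤ)) /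
            ((-2 : ℂ) ^ i * (i.factorial : ℂ) * poch (α + 1) (i : ℤ))) ∧
      (∀ n : ℤ, vN.eval (n : ℂ) / vD.eval (n : ℂ)
        = (poch (ε + β + 1) n * poch (ε + 1) n /
              (poch (ε + α + 1) n * poch (ε + α + β + 1) n)) *
            (poch (-((n : ℂ) + ε + α + β)) (i : ℤ) * poch ((n : ℂ) + ε + 1) (i : ℤ)) /
            ((-2 : ℂ) ^ i * (i.factorial : ℂ) * poch (-α + 1) (i : ℤ))) ∧
      uN.comp (-Polynomial.X - Polynomial.C (2 * ε + α + β + 1)) * uD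
        = uN * (uD.comp (-Polynomial.X - Polynomial.C (2 * ε + α + β + 1))) ∧
      vN.comp (-Polynomial.X - Polynomial.C (2 * ε + α + β + 1)) * vD
        = vN * (vD.comp (-Polynomial.X - Polynomial.C (2 * ε + α + β + 1))) := by
  obtain ⟨W, hW⟩ : ∃ W, W = PP (ε + α + β) i * QQ (ε + 1) i := ⟨_, rfl⟩
  have hWc : W.comp (-Polynomial.X - Polynomial.C (2 * ε + α + β + 1)) = W := by
    rw [hW, Polynomial.mul_comp, PP_comp _ _ (ε + 1) _ (by ring),
      QQ_comp _ _ (ε + α + β) _ (by ring), mul_comm]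
  have hWe : ∀ n : ℤ, poch (-((n : ℂ) + ε + α + β)) (i : ℤ) * poch ((n : ℂ) + ε + 1) (i : ℤ)
      = W.eval (n : ℂ) := by
    intro n
    rw [hW, Polynomial.eval_mul, PP_eval, QQ_eval']
    simp only [add_assoc]
  have h1 : ∀ m : ℤ, ε + 1 ≠ m := fun m h => (hgood (m - 1)).1 (by
    push_cast; linear_combination h)
  have h2 : ∀ m : ℤ, ε + α + 1 ≠ m := fun m h => (hgood (m - 1)).2.1 (by
    push_cast; linear_combination h)
  have h3 : ∀ m : ℤ, ε + β + 1 ≠ m := fun m h => (hgood (m - 1)).2.2.1 (by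
    push_cast; linear_combination h)
  have h4 : ∀ m : ℤ, ε + α + β + 1 ≠ m := fun m h => (hgood (m - 1)).2.2.2.1 (by
    push_cast; linear_combination h)
  have hv : ∃ vN vD : Polynomial ℂ, (∀ n : ℤ, vD.eval (n : ℂ) ≠ 0) ∧
      (∀ n : ℤ, vN.eval (n : ℂ) / vD.eval (n : ℂ) = poch (ε + β + 1) n * poch (ε + 1) n /
              (poch (ε + α + 1) n * poch (ε + α + β + 1) n)) ∧
      vN.comp (-Polynomial.X - Polynomial.C (2 * ε + α + β + 1)) = vN ∧
      vD.comp (-Polynomial.X - Polynomial.C (2 * ε + α + β + 1)) = vD := by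
    rcases le_total 0 a with ha | ha
    · obtain ⟨m, rfl⟩ := Int.eq_ofNat_of_zero_le ha
      have hα' : α = (m : ℂ) := by simpa using hα
      refine ⟨Polynomial.C ((QQ (ε + 1) m).eval 0 * (QQ (ε + β + 1) m).eval 0),
        QQ (ε + 1) m * QQ (ε + β + 1) m, ?_, ?_, ?_, ?_⟩
      · intro n
        rw [Polynomial.eval_mul]
        exact mul_ne_zero (QQ_ne _ h1 _ _) (QQ_ne _ h3 _ _)
      · intro n
        have r1 := poch_ratio (ε + 1) (ε + α + 1) h1 m (by rw [hα']; ring) n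
        have r3 := poch_ratio (ε + β + 1) (ε + α + β + 1) h3 m (by rw [hα']; ring) n
        rw [Polynomial.eval_mul, Polynomial.eval_C, div_eq_div_iff
          (mul_ne_zero (QQ_ne _ h1 _ _) (QQ_ne _ h3 _ _))
          (mul_ne_zero (poch_ne _ h2 _) (poch_ne _ h4 _))]
        calc _ = ((QQ (ε + 1) m).eval 0 * poch (ε + α + 1) n) *
              ((QQ (ε + β + 1) m).eval 0 * poch (ε + α + β + 1) n) := by ring
          _ = _ := by rw [← r1, ← r3]; ring
      · simp
      · exact QQ_comp2 _ _ _ _ (by rw [hα']; ring)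
    · obtain ⟨m, hm⟩ := Int.eq_ofNat_of_zero_le (neg_nonneg.2 ha)
      have hα' : α = -(m : ℂ) := by
        rw [hα, show a = -(m : ℤ) by omega]; simp
      have k2 := QQ_ne _ h2 m 0
      have k4 := QQ_ne _ h4 m 0
      rw [Int.cast_zero] at k2 k4
      refine ⟨QQ (ε + α + 1) m * QQ (ε + α + β + 1) m,
        Polynomial.C ((QQ (ε + α + 1) m).eval 0 * (QQ (ε + α + β + 1) m).eval 0), ?_, ?_, ?_, ?_⟩
      · intro n
        rw [Polynomial.eval_C]
        exact mul_ne_zero k2 k4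
      · intro n
        have r1 := poch_ratio (ε + α + 1) (ε + 1) h2 m (by rw [hα']; ring) n
        have r3 := poch_ratio (ε + α + β + 1) (ε + β + 1) h4 m (by rw [hα']; ring) n
        rw [Polynomial.eval_mul, Polynomial.eval_C, div_eq_div_iff
          (mul_ne_zero k2 k4)
          (mul_ne_zero (poch_ne _ h2 _) (poch_ne _ h4 _))]
        calc _ = (poch (ε + α + 1) n * (QQ (ε + α + 1) m).eval (n : ℂ)) *
              (poch (ε + α + β + 1) n * (QQ (ε + α + β + 1) m).eval (n : ℂ)) := by ring
          _ = _ := by rw [r1, r3]; ring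
      · exact QQ_comp2 _ _ _ _ (by rw [hα']; ring)
      · simp
  obtain ⟨vN, vD, hv0, hve, hvN, hvD⟩ := hv
  refine ⟨Polynomial.C ((-2 : ℂ) ^ i * (i.factorial : ℂ) * poch (α + 1) (i : ℤ))⁻¹ *
      (PP ε i * QQ (ε + α + β + 1) i), 1,
    Polynomial.C ((-2 : ℂ) ^ i * (i.factorial : ℂ) * poch (-α + 1) (i : ℤ))⁻¹ * (vN * W), vD,
    ?_, hv0, ?_, ?_, ?_, ?_⟩
  · intro n; simp
  · intro n
    rw [Polynomial.eval_one, div_one, Polynomial.eval_mul, Polynomial.eval_C, Polynomial.eval_mul,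
      PP_eval, QQ_eval', div_eq_mul_inv, mul_comm]
    simp only [add_assoc]
  · intro n
    rw [← hve, hWe, Polynomial.eval_mul, Polynomial.eval_C, Polynomial.eval_mul]
    simp only [div_eq_mul_inv]
    ring
  · rw [Polynomial.mul_comp, Polynomial.mul_comp, PP_comp _ _ (ε + α + β + 1) _ (by ring),
      QQ_comp _ _ ε _ (by ring), Polynomial.C_comp, Polynomial.one_comp]
    ring
  · rw [Polynomial.mul_comp, Polynomial.mul_comp, hWc, hvN, hvD, Polynomial.C_comp]
end
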